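/- Let B ⊂ ℍ be nonempty and suppose there exists α > 1 such that the set B \ {x ∈ ℍ : x₂ ≤ |x₁|^{1/α}} is finite. Then there exists some x ∈ B with H_B(x) > 0. -/

import Mathlib

open Filter

namespace SHM

/-- The upper half planar lattice `ℍ = {(x₁,x₂) ∈ ℤ² : x₂ ≥ 0}` (including the x-axis). -/
def upperH : Set (ℤ × ℤ) := {p | 0 ≤ p.2}

/-- The horizontal line `L_n = {(x,n) : x ∈ ℤ}` of height `n`. -/
def lineH (n : ℤ) : Set (ℤ × ℤ) := {p | p.2 = n}

/-- The four unit steps of the planar simple random walk. -/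
def dirs : Finset (ℤ × ℤ) := {(1,0), (-1,0), (0,1), (0,-1)}

/-- The position after `m` steps of the walk started at `z` whose first `n`
increments are given by `σ`. -/
def pos (z : ℤ × ℤ) {n : ℕ} (σ : Fin n → ℤ × ℤ) (m : ℕ) : ℤ × ℤ :=
  z + ∑ i ∈ Finset.univ.filter (fun i : Fin n => (i : ℕ) < m), σ i

/-- The probability that the first `n` increments of the simple random walk
(each uniform on the four unit vectors) satisfy the predicate `E`. -/
noncomputable def stepProb (n : ℕ) (E : (Fin n → ℤ × ℤ) → Prop) : ℝ :=
  (Nat.card {σ : Fin n → ↥dirs // E fun i => ((σ i : ℤ × ℤ))} : ℝ) / 4 ^ n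

/-- `P_z(S_{τ̄_A} = x)` : the walk started at `z` hits `A` (in finite time) for the
first time precisely at the point `x`.  Here `τ̄_A = min {m ≥ 0 : S_m ∈ A}`. -/
noncomputable def hitProb (z : ℤ × ℤ) (A : Set (ℤ × ℤ)) (x : ℤ × ℤ) : ℝ :=
  ∑' n : ℕ, stepProb n fun σ =>
    pos z σ n = x ∧ x ∈ A ∧ ∀ m < n, pos z σ m ∉ A

/-- `P_z(τ̄_A < τ̄_B)` : the walk started at `z` hits `A` strictly before hitting `B`. -/
noncomputable def hitBeforeProb (z : ℤ × ℤ) (A B : Set (ℤ × ℤ)) : ℝ :=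
  ∑' n : ℕ, stepProb n fun σ =>
    pos z σ n ∈ A ∧ pos z σ n ∉ B ∧ ∀ m < n, pos z σ m ∉ A ∧ pos z σ m ∉ B

/-- The stationary harmonic measure `H_{B,N}(x) = Σ_{z ∈ L_N \ B} P_z(S_{τ̄_{B ∪ L₀}} = x)`. -/
noncomputable def harm (B : Set (ℤ × ℤ)) (N : ℕ) (x : ℤ × ℤ) : ℝ :=
  ∑' z : ↥(lineH (N : ℤ) \ B), hitProb (z : ℤ × ℤ) (B ∪ lineH 0) x

/-!
Reversing time, `H_{B,N}(x)` is the expected number of visits to `L_N` of the walk started at `x`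
before it returns to `B ∪ L₀`. It is nonincreasing in `N` once `N` exceeds the height of `x`, since
`L_N` can only be reached across the lower lines, so it converges and only positivity of the limit
is at stake.

Let `x` be the highest point of `B` in its column. Climbing `k` steps in the column has probability
`4⁻ᵏ` and avoids `B`, so it suffices to bound the number of visits from below for the walk started
at some point `y` high above `x`. Suppose that `v` is nonnegative, harmonic above the axis, at least
the height on `B`, and sublinear on columns. Optional stopping for the height truncated at `N` minus
`v` shows that the expected number of visits to `L_N` is at least `2 y₂ - 4 v(y)`, which is positive
for `y` high enough.

For `B` below the graph of `φ(|i|)` such a `v` is a sum of the harmonic functions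
`1 - cos(2⁻ᵏ i) exp(-sₖ j)` with weights of order `φ(2ᵏ⁺¹)`: the `k`-th one is bounded below for
`2ᵏ ≤ |i| ≤ 2ᵏ⁺¹` and at most `2⁻ᵏ (|i| + j)`, so that the sum converges as soon as
`∑ φ(2ᵏ) / 2ᵏ` does.
-/

/-! ### The killed walk -/

/-- The transition operator of the simple random walk: `avg u z = E_z[u(S₁)]`. -/
noncomputable def avg : Module.End ℝ (ℤ × ℤ → ℝ) where
  toFun u z := (∑ d ∈ dirs, u (z + d)) / 4
  map_add' u v := by ext z; simp [Finset.sum_add_distrib, add_div]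
  map_smul' c u := by ext z; simp [← Finset.mul_sum, mul_div_assoc]

theorem avg_apply (u : ℤ × ℤ → ℝ) (z : ℤ × ℤ) : avg u z = (∑ d ∈ dirs, u (z + d)) / 4 := rfl

theorem avg_apply_neighbors (u : ℤ × ℤ → ℝ) (z : ℤ × ℤ) :
    avg u z =
      (u (z.1 + 1, z.2) + u (z.1 - 1, z.2) + u (z.1, z.2 + 1) + u (z.1, z.2 - 1)) / 4 := by
  obtain ⟨i, j⟩ := z
  simp [avg_apply, dirs, ← sub_eq_add_neg, add_assoc]

theorem avg_const (D : ℝ) : avg (fun _ => D) = fun _ => D := by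
  ext z
  rw [avg_apply_neighbors]
  ring

theorem avg_height : avg (fun z => (z.2 : ℝ)) = fun z => (z.2 : ℝ) := by
  ext z
  rw [avg_apply_neighbors]
  push_cast
  ring

theorem snd_sub_one_le_of_mem_dirs {d : ℤ × ℤ} (hd : d ∈ dirs) (z : ℤ × ℤ) :
    z.2 - 1 ≤ (z + d).2 := by
  simp only [dirs, Finset.mem_insert, Finset.mem_singleton] at hd
  rcases hd with rfl | rfl | rfl | rfl <;> simp only [Prod.snd_add] <;> omega

/-- The walk killed on `A`: `killedStep A u z = E_z[u(S₁); S₁ ∉ A]`. The starting point is not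
tested, so that `(killedStep A ^ n) u z = E_z[u(S_n); n < τ_A]` with the hitting time `τ_A ≥ 1`. -/
noncomputable def killedStep (A : Set (ℤ × ℤ)) : Module.End ℝ (ℤ × ℤ → ℝ) where
  toFun u := avg (Aᶜ.indicator u)
  map_add' u v := by rw [Set.indicator_add', map_add]
  map_smul' c u := by
    rw [RingHom.id_apply, ← map_smul]
    exact congrArg avg (Set.indicator_const_smul _ c u)

theorem killedStep_apply (A : Set (ℤ × ℤ)) (u : ℤ × ℤ → ℝ) :
    killedStep A u = avg (Aᶜ.indicator u) := rfl

theorem killedStep_indicator (A E : Set (ℤ × ℤ)) (u : ℤ × ℤ → ℝ) :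
    killedStep A (E.indicator u) = avg ((E \ A).indicator u) := by
  rw [killedStep_apply, Set.indicator_indicator, Set.inter_comm, Set.sdiff_eq]

theorem continuous_killedStep (A : Set (ℤ × ℤ)) : Continuous (killedStep A) := by
  refine continuous_pi fun z => ?_
  simp only [killedStep_apply, avg_apply]
  refine (continuous_finsetSum _ fun d _ => ?_).div_const 4
  by_cases h : z + d ∈ A
  · simpa [h] using continuous_const
  · simpa [h] using continuous_apply (z + d)

/-- A walk started in `S` stays in `S` until it hits `A`. -/
def ConfinedUntil (A S : Set (ℤ × ℤ)) : Prop := ∀ z ∈ S, ∀ d ∈ dirs, z + d ∈ A ∪ S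

theorem confinedUntil_univ (A : Set (ℤ × ℤ)) : ConfinedUntil A Set.univ :=
  fun _ _ _ _ => Or.inr trivial

theorem confinedUntil_above_axis {A : Set (ℤ × ℤ)} (hA : lineH 0 ⊆ A) :
    ConfinedUntil A {z | 0 < z.2} := by
  intro z (hz : 0 < z.2) d hd
  have hge := snd_sub_one_le_of_mem_dirs hd z
  rcases (show 0 ≤ (z + d).2 by omega).eq_or_lt with h | h
  · exact Or.inl (hA h.symm)
  · exact Or.inr h

section Monotonicity

variable {A S : Set (ℤ × ℤ)} {u v f : ℤ × ℤ → ℝ}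

theorem killedStep_mono (hS : ConfinedUntil A S) (h : ∀ z ∈ S, u z ≤ v z) :
    ∀ z ∈ S, killedStep A u z ≤ killedStep A v z := by
  intro z hz
  simp only [killedStep_apply, avg_apply]
  gcongr (∑ d ∈ dirs, ?_) / 4 with d hd
  by_cases hzd : z + d ∈ A
  · simp [hzd]
  · simpa [hzd] using h _ ((hS z hz d hd).resolve_left hzd)

theorem killedStep_pow_mono (hS : ConfinedUntil A S) (h : ∀ z ∈ S, u z ≤ v z) (n : ℕ) :
    ∀ z ∈ S, (killedStep A ^ n) u z ≤ (killedStep A ^ n) v z := by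
  induction n with
  | zero => exact h
  | succ n ih =>
    simp only [pow_succ', Module.End.mul_apply]
    exact killedStep_mono hS ih

theorem killedStep_pow_nonneg (hu : 0 ≤ u) (n : ℕ) : 0 ≤ (killedStep A ^ n) u := fun z => by
  simpa using killedStep_pow_mono (confinedUntil_univ A) (fun z _ => hu z) n z trivial

theorem killedStep_le_avg (hu : 0 ≤ u) (z : ℤ × ℤ) : killedStep A u z ≤ avg u z := by
  simp only [killedStep_apply, avg_apply]
  gcongr with d
  exact Set.indicator_le_self' (fun _ _ => hu _) _

theorem avg_le_killedStep {z : ℤ × ℤ} (hu : ∀ d ∈ dirs, z + d ∈ A → u (z + d) ≤ 0) :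
    avg u z ≤ killedStep A u z := by
  simp only [killedStep_apply, avg_apply]
  gcongr with d hd
  by_cases h : z + d ∈ A
  · simpa [h] using hu d hd h
  · simp [h]

theorem quarter_mul_le_killedStep (hu : 0 ≤ u) {z d : ℤ × ℤ} (hd : d ∈ dirs) (hzd : z + d ∉ A) :
    1 / 4 * u (z + d) ≤ killedStep A u z := by
  have hle : Aᶜ.indicator u (z + d) ≤ ∑ e ∈ dirs, Aᶜ.indicator u (z + e) :=
    Finset.single_le_sum (f := fun e => Aᶜ.indicator u (z + e))
      (fun e _ => Set.indicator_nonneg (fun _ _ => hu _) _) hd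
  rw [Set.indicator_of_mem hzd] at hle
  rw [killedStep_apply, avg_apply]
  linarith

/-- Dynkin's formula, as an inequality for subsolutions. -/
theorem add_sum_le_killedStep_pow (hS : ConfinedUntil A S)
    (h : ∀ z ∈ S, u z + f z ≤ killedStep A u z) (n : ℕ) :
    ∀ z ∈ S, u z + ∑ m ∈ Finset.range n, (killedStep A ^ m) f z ≤ (killedStep A ^ n) u z := by
  intro z hz
  induction n with
  | zero => simp
  | succ n ih =>
    have hstep := killedStep_pow_mono hS (u := u + f) h n z hz
    rw [map_add, Pi.add_apply] at hstep
    rw [Finset.sum_range_succ, pow_succ, Module.End.mul_apply]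
    linarith

theorem killedStep_pow_le_add_sum (hS : ConfinedUntil A S)
    (h : ∀ z ∈ S, killedStep A u z ≤ u z + f z) (n : ℕ) :
    ∀ z ∈ S, (killedStep A ^ n) u z ≤ u z + ∑ m ∈ Finset.range n, (killedStep A ^ m) f z := by
  intro z hz
  have hneg := add_sum_le_killedStep_pow (u := -u) (f := -f) hS (fun w hw => by
    have := h w hw
    simp only [map_neg, Pi.neg_apply]
    linarith) n z hz
  simp only [map_neg, Pi.neg_apply, Finset.sum_neg_distrib] at hneg
  linarith

end Monotonicity

/-- `visitProb A E n x = P_x(S_n ∈ E, n < τ_A)`. -/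
noncomputable def visitProb (A E : Set (ℤ × ℤ)) (n : ℕ) (x : ℤ × ℤ) : ℝ :=
  (killedStep A ^ n) (E.indicator 1) x

/-- The expected number of times `0 ≤ n < τ_A` that the walk started at `x` spends in `E`; the
value is `0` if this expectation is infinite. -/
noncomputable def expectedVisits (A E : Set (ℤ × ℤ)) (x : ℤ × ℤ) : ℝ :=
  ∑' n, visitProb A E n x

section Visits

variable {A E F : Set (ℤ × ℤ)} {x z : ℤ × ℤ}

theorem visitProb_zero (A E : Set (ℤ × ℤ)) (x : ℤ × ℤ) :
    visitProb A E 0 x = E.indicator 1 x := rfl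

theorem visitProb_nonneg (A E : Set (ℤ × ℤ)) (n : ℕ) (x : ℤ × ℤ) : 0 ≤ visitProb A E n x :=
  killedStep_pow_nonneg (Set.indicator_nonneg fun _ _ => zero_le_one) n x

theorem visitProb_succ (A E : Set (ℤ × ℤ)) (n : ℕ) (x : ℤ × ℤ) :
    visitProb A E (n + 1) x = (killedStep A ^ n) (avg ((E \ A).indicator 1)) x := by
  rw [visitProb, pow_succ, Module.End.mul_apply, killedStep_indicator]

theorem visitProb_succ_of_subset (h : E ⊆ A) (n : ℕ) (x : ℤ × ℤ) :
    visitProb A E (n + 1) x = 0 := by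
  rw [visitProb_succ, Set.sdiff_eq_empty.2 h, Set.indicator_empty', map_zero, map_zero,
    Pi.zero_apply]

theorem visitProb_diff (hF : F ⊆ A) (hx : x ∉ E) (n : ℕ) :
    visitProb A (E \ F) n x = visitProb A E n x := by
  cases n with
  | zero => simp [visitProb_zero, hx]
  | succ n => rw [visitProb_succ, visitProb_succ, Set.sdiff_sdiff, Set.union_eq_right.2 hF]

theorem avg_indicator_singleton (z : ℤ × ℤ) :
    avg (({z} : Set (ℤ × ℤ)).indicator 1) =
      (1 / 4 : ℝ) • ∑ d ∈ dirs, ({z + d} : Set (ℤ × ℤ)).indicator 1 := by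
  ext w
  have hsymm : ∑ d ∈ dirs, ({z} : Set (ℤ × ℤ)).indicator (1 : ℤ × ℤ → ℝ) (w + d) =
      ∑ d ∈ dirs, ({z + d} : Set (ℤ × ℤ)).indicator 1 w := by
    refine Finset.sum_nbij' Neg.neg Neg.neg (by decide) (by decide) (by simp) (by simp) ?_
    intro d _
    simp only [Set.indicator_apply, Set.mem_singleton_iff, ← sub_eq_add_neg, eq_sub_iff_add_eq,
      Pi.one_apply]
  rw [avg_apply, hsymm, Pi.smul_apply, Finset.sum_apply, smul_eq_mul]
  ring

theorem visitProb_singleton_succ (hz : z ∉ A) (n : ℕ) (x : ℤ × ℤ) :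
    visitProb A {z} (n + 1) x = (∑ d ∈ dirs, visitProb A {z + d} n x) / 4 := by
  rw [visitProb_succ, sdiff_eq_left.2 (Set.disjoint_singleton_left.2 hz),
    avg_indicator_singleton, map_smul, map_sum, Pi.smul_apply, Finset.sum_apply, smul_eq_mul,
    one_div_mul_eq_div]
  rfl

theorem hasSum_visitProb_singleton (A E : Set (ℤ × ℤ)) (n : ℕ) (x : ℤ × ℤ) :
    HasSum (fun z : E => visitProb A {↑z} n x) (visitProb A E n x) := by
  have hind : HasSum (fun z : E => ({↑z} : Set (ℤ × ℤ)).indicator (1 : ℤ × ℤ → ℝ))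
      (E.indicator 1) := by
    refine Pi.hasSum.2 fun w => ?_
    by_cases hw : w ∈ E
    · have hsingle := hasSum_single
        (f := fun z : E => ({↑z} : Set (ℤ × ℤ)).indicator (1 : ℤ × ℤ → ℝ) w)
        ⟨w, hw⟩ fun z hz => Set.indicator_of_notMem (fun h => hz (Subtype.ext h.symm)) _
      rwa [Set.indicator_of_mem (Set.mem_singleton w), ← Set.indicator_of_mem hw 1] at hsingle
    · have hzero (z : E) : ({↑z} : Set (ℤ × ℤ)).indicator (1 : ℤ × ℤ → ℝ) w = 0 := by
        simp [ne_of_mem_of_not_mem z.2 hw |>.symm]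
      simp only [hzero, Set.indicator_of_notMem hw, hasSum_zero]
  have hcont : Continuous (killedStep A ^ n) := by
    rw [Module.End.coe_pow]
    exact (continuous_killedStep A).iterate n
  exact Pi.hasSum.1 (hind.map (killedStep A ^ n) hcont) x

theorem quarter_mul_expectedVisits_le {d : ℤ × ℤ} (hd : d ∈ dirs) (hzd : z + d ∉ A)
    (hz : Summable fun n => visitProb A E n z) (hd' : Summable fun n => visitProb A E n (z + d)) :
    1 / 4 * expectedVisits A E (z + d) ≤ expectedVisits A E z := by
  have hstep (n : ℕ) : 1 / 4 * visitProb A E n (z + d) ≤ visitProb A E (n + 1) z := by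
    rw [visitProb, visitProb, pow_succ', Module.End.mul_apply]
    exact quarter_mul_le_killedStep (visitProb_nonneg A E n) hd hzd
  calc 1 / 4 * expectedVisits A E (z + d)
      = ∑' n, 1 / 4 * visitProb A E n (z + d) := tsum_mul_left.symm
    _ ≤ ∑' n, visitProb A E (n + 1) z :=
      (hd'.mul_left _).tsum_le_tsum hstep ((summable_nat_add_iff 1).2 hz)
    _ ≤ expectedVisits A E z := by
      rw [expectedVisits, hz.tsum_eq_zero_add]
      exact le_add_of_nonneg_left (visitProb_nonneg A E 0 z)

end Visits

/-! ### Time reversal -/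

theorem pos_zero (z : ℤ × ℤ) {n : ℕ} (σ : Fin n → ℤ × ℤ) : pos z σ 0 = z := by
  simp [pos]

theorem pos_cons_succ (z d : ℤ × ℤ) {n : ℕ} (σ : Fin n → ℤ × ℤ) (m : ℕ) :
    pos z (Fin.cons d σ : Fin (n + 1) → ℤ × ℤ) (m + 1) = pos (z + d) σ m := by
  simp [pos, Finset.sum_filter, Fin.sum_univ_succ, add_assoc]

theorem stepProb_eq_zero {n : ℕ} {E : (Fin n → ℤ × ℤ) → Prop} (h : ∀ σ, ¬E σ) :
    stepProb n E = 0 := by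
  simp [stepProb, h]

theorem stepProb_succ (n : ℕ) (E : (Fin (n + 1) → ℤ × ℤ) → Prop) :
    stepProb (n + 1) E = (∑ d ∈ dirs, stepProb n fun σ => E (Fin.cons d σ)) / 4 := by
  have hcard : Nat.card {σ : Fin (n + 1) → dirs // E fun i => σ i} =
      ∑ d : dirs, Nat.card {σ : Fin n → dirs // E (Fin.cons (d : ℤ × ℤ) fun i => σ i)} := by
    rw [← Nat.card_sigma]
    refine Nat.card_congr (((Fin.consEquiv fun _ => dirs).symm.subtypeEquiv fun σ => ?_).trans
      (Equiv.subtypeProdEquivSigmaSubtype fun (d : dirs) (σ : Fin n → dirs) =>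
        E (Fin.cons (d : ℤ × ℤ) fun i => σ i)))
    have hσ : (Fin.cons (σ 0 : ℤ × ℤ) fun i => σ i.succ : Fin (n + 1) → ℤ × ℤ) =
        fun i => (σ i : ℤ × ℤ) := Fin.cons_self_tail fun i => (σ i : ℤ × ℤ)
    rw [← hσ]
    rfl
  simp only [stepProb]
  rw [hcard, ← Finset.sum_coe_sort dirs, Nat.cast_sum, ← Finset.sum_div, pow_succ, div_div]

theorem firstHit_cons_iff {A : Set (ℤ × ℤ)} {z : ℤ × ℤ} (hz : z ∉ A) (x d : ℤ × ℤ) {n : ℕ}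
    (σ : Fin n → ℤ × ℤ) :
    (pos z (Fin.cons d σ : Fin (n + 1) → ℤ × ℤ) (n + 1) = x ∧ x ∈ A ∧
        ∀ m < n + 1, pos z (Fin.cons d σ : Fin (n + 1) → ℤ × ℤ) m ∉ A) ↔
      pos (z + d) σ n = x ∧ x ∈ A ∧ ∀ m < n, pos (z + d) σ m ∉ A := by
  rw [Nat.forall_lt_succ_left']
  simp [pos_zero, pos_cons_succ, hz]

/- The killed walk is reversible: reading a path backwards turns a first hit of `A` at the point
`x` into an excursion from `x` which has not yet returned to `A`. -/
theorem stepProb_firstHit {A : Set (ℤ × ℤ)} {x : ℤ × ℤ} (hx : x ∈ A) (n : ℕ) (z : ℤ × ℤ) :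
    stepProb n (fun σ => pos z σ n = x ∧ x ∈ A ∧ ∀ m < n, pos z σ m ∉ A) =
      visitProb A {z} n x := by
  induction n generalizing z with
  | zero => by_cases h : z = x <;> simp [visitProb_zero, stepProb, pos_zero, h, hx, Ne.symm]
  | succ n ih =>
    by_cases hz : z ∈ A
    · rw [visitProb_succ_of_subset (Set.singleton_subset_iff.2 hz), stepProb_eq_zero]
      rintro σ ⟨-, -, hσ⟩
      exact hσ 0 n.succ_pos (by rwa [pos_zero])
    · rw [visitProb_singleton_succ hz, stepProb_succ]
      simp only [firstHit_cons_iff hz, ih]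

theorem hitProb_eq_expectedVisits {A : Set (ℤ × ℤ)} {x : ℤ × ℤ} (hx : x ∈ A) (z : ℤ × ℤ) :
    hitProb z A x = expectedVisits A {z} x :=
  tsum_congr fun n => stepProb_firstHit hx n z

theorem tsum_hitProb {A E : Set (ℤ × ℤ)} {x : ℤ × ℤ} (hx : x ∈ A)
    (hsum : Summable fun n => visitProb A E n x) :
    ∑' z : E, hitProb z A x = expectedVisits A E x := by
  have hpoint (n : ℕ) := hasSum_visitProb_singleton A E n x
  have hsum' : Summable (Function.uncurry fun n (z : E) => visitProb A {↑z} n x) :=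
    (summable_prod_of_nonneg fun _ => visitProb_nonneg _ _ _ _).2
      ⟨fun n => (hpoint n).summable, hsum.congr fun n => (hpoint n).tsum_eq.symm⟩
  simp only [hitProb_eq_expectedVisits hx, expectedVisits]
  rw [hsum'.tsum_comm]
  exact tsum_congr fun n => (hpoint n).tsum_eq

/-! ### Visits to horizontal lines -/

/-- The height of `z` above the level `a`, truncated at the level `b`. -/
noncomputable def slabHeight (a b : ℤ) (z : ℤ × ℤ) : ℝ := ((max a (min z.2 b) - a : ℤ) : ℝ)

section LineVisits

variable {A : Set (ℤ × ℤ)} {a b : ℤ}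

theorem slabHeight_nonneg (a b : ℤ) : 0 ≤ slabHeight a b := fun z => by
  simp [slabHeight]

theorem slabHeight_le_sub {z : ℤ × ℤ} (hz : a ≤ z.2) : slabHeight a b z ≤ z.2 - a := by
  rw [slabHeight]
  exact_mod_cast show max a (min z.2 b) - a ≤ z.2 - a by omega

theorem slabHeight_le (hab : a ≤ b) (z : ℤ × ℤ) : slabHeight a b z ≤ b - a := by
  rw [slabHeight]
  exact_mod_cast show max a (min z.2 b) - a ≤ b - a by omega

theorem slabHeight_of_mem_Icc {z : ℤ × ℤ} (hz : z.2 ∈ Set.Icc a b) :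
    slabHeight a b z = z.2 - a := by
  rw [slabHeight, min_eq_left hz.2, max_eq_right hz.1, Int.cast_sub]

theorem slabHeight_of_le {z : ℤ × ℤ} (hz : z.2 ≤ a) : slabHeight a b z = 0 := by
  rw [slabHeight, max_eq_left ((min_le_left _ _).trans hz), sub_self, Int.cast_zero]

theorem avg_slabHeight (hab : a ≤ b) :
    avg (slabHeight a b) = slabHeight a b +
      (1 / 4 : ℝ) • ((lineH a).indicator 1 - (lineH b).indicator 1) := by
  ext ⟨i, j⟩
  have hstep : max a (min (j + 1) b) + max a (min (j - 1) b) =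
      2 * max a (min j b) + ((if j = a then 1 else 0) - if j = b then 1 else 0) := by
    split_ifs <;> omega
  have hstep' := congrArg (Int.cast : ℤ → ℝ) hstep
  push_cast at hstep'
  simp only [avg_apply_neighbors, slabHeight, lineH, Pi.add_apply, Pi.smul_apply, Pi.sub_apply,
    Set.indicator_apply, Set.mem_ofPred_eq, Pi.one_apply, smul_eq_mul]
  push_cast
  linarith

/- To visit `L_b` from below, the walk has to cross `L_a`. -/
theorem sum_visitProb_lineH_le (A : Set (ℤ × ℤ)) (hab : a ≤ b) (n : ℕ) (x : ℤ × ℤ) :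
    ∑ m ∈ Finset.range n, visitProb A (lineH b) m x ≤
      4 * slabHeight a b x + ∑ m ∈ Finset.range n, visitProb A (lineH a) m x := by
  set f : ℤ × ℤ → ℝ := (1 / 4 : ℝ) • ((lineH a).indicator 1 - (lineH b).indicator 1) with hf
  have hstep (z : ℤ × ℤ) : killedStep A (slabHeight a b) z ≤ slabHeight a b z + f z :=
    (killedStep_le_avg (slabHeight_nonneg a b) z).trans_eq (congrFun (avg_slabHeight hab) z)
  have hsum := killedStep_pow_le_add_sum (confinedUntil_univ A) (fun z _ => hstep z) n x trivial
  have hnonneg := killedStep_pow_nonneg (A := A) (slabHeight_nonneg a b) n x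
  have hterm (m : ℕ) : (killedStep A ^ m) f x =
      1 / 4 * (visitProb A (lineH a) m x - visitProb A (lineH b) m x) := by
    rw [hf, map_smul, map_sub]
    rfl
  simp only [hterm, ← Finset.mul_sum, Finset.sum_sub_distrib] at hsum
  rw [Pi.zero_apply] at hnonneg
  linarith

theorem summable_visitProb_lineH (hA : lineH 0 ⊆ A) (hb : 0 ≤ b) (x : ℤ × ℤ) :
    Summable fun n => visitProb A (lineH b) n x := by
  have hzero : Summable fun n => visitProb A (lineH 0) n x :=
    (summable_nat_add_iff 1).1 (by simpa only [visitProb_succ_of_subset hA] using summable_zero)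
  refine summable_of_sum_range_le (fun n => visitProb_nonneg A _ n x) fun n =>
    (sum_visitProb_lineH_le A hb n x).trans (add_le_add_right
      (hzero.sum_le_tsum _ fun n _ => visitProb_nonneg A _ n x) _)

theorem expectedVisits_lineH_anti (hA : lineH 0 ⊆ A) (ha : 0 ≤ a) (hab : a ≤ b) {x : ℤ × ℤ}
    (hx : x.2 ≤ a) : expectedVisits A (lineH b) x ≤ expectedVisits A (lineH a) x :=
  (summable_visitProb_lineH hA (ha.trans hab) x).tsum_le_of_sum_range_le fun n => by
    have hle := sum_visitProb_lineH_le A hab n x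
    rw [slabHeight_of_le hx, mul_zero, zero_add] at hle
    exact hle.trans ((summable_visitProb_lineH hA ha x).sum_le_tsum _
      fun n _ => visitProb_nonneg A _ n x)

theorem expectedVisits_nonneg (A E : Set (ℤ × ℤ)) (x : ℤ × ℤ) : 0 ≤ expectedVisits A E x :=
  tsum_nonneg fun n => visitProb_nonneg A E n x

theorem exists_tendsto_expectedVisits_lineH (hA : lineH 0 ⊆ A) {x : ℤ × ℤ} (hx : 0 ≤ x.2) :
    ∃ l, Tendsto (fun N : ℕ => expectedVisits A (lineH N) x) atTop (nhds l) := by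
  obtain ⟨M, hM⟩ := Int.eq_ofNat_of_zero_le hx
  have hanti : Antitone fun N : ℕ => expectedVisits A (lineH ↑(N + M)) x := fun N N' h =>
    expectedVisits_lineH_anti hA (by positivity) (by lia) (by lia)
  have hbdd : BddBelow (Set.range fun N : ℕ => expectedVisits A (lineH ↑(N + M)) x) :=
    ⟨0, Set.forall_mem_range.2 fun N => expectedVisits_nonneg A _ x⟩
  exact ⟨_, (tendsto_add_atTop_iff_nat M).1 (tendsto_atTop_ciInf hanti hbdd)⟩

theorem harm_eq_expectedVisits {B : Set (ℤ × ℤ)} {x : ℤ × ℤ} (hx : x ∈ B) {N : ℕ}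
    (hN : x.2 ≠ N) : harm B N x = expectedVisits (B ∪ lineH 0) (lineH N) x := by
  have hvisit (n : ℕ) :
      visitProb (B ∪ lineH 0) (lineH N \ B) n x = visitProb (B ∪ lineH 0) (lineH N) n x :=
    visitProb_diff Set.subset_union_left hN n
  rw [harm, tsum_hitProb (Or.inl hx), expectedVisits, expectedVisits, tsum_congr hvisit]
  simpa only [hvisit] using summable_visitProb_lineH Set.subset_union_right N.cast_nonneg x

theorem exists_tendsto_harm {B : Set (ℤ × ℤ)} (hB : B ⊆ upperH) {x : ℤ × ℤ} (hx : x ∈ B) :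
    ∃ l, Tendsto (fun N : ℕ => harm B N x) atTop (nhds l) := by
  obtain ⟨l, hl⟩ := exists_tendsto_expectedVisits_lineH (A := B ∪ lineH 0)
    Set.subset_union_right (hB hx)
  refine ⟨l, hl.congr' ?_⟩
  filter_upwards [eventually_gt_atTop x.2.toNat] with N hN
  exact (harm_eq_expectedVisits hx (by lia)).symm

theorem quarter_pow_mul_expectedVisits_le {M : ℤ} (hA : lineH 0 ⊆ A) (hM : 0 ≤ M) {x : ℤ × ℤ}
    (hcol : ∀ j, x.2 < j → (x.1, j) ∉ A) (k : ℕ) :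
    (1 / 4) ^ k * expectedVisits A (lineH M) (x.1, x.2 + k) ≤ expectedVisits A (lineH M) x := by
  induction k with
  | zero => simp
  | succ k ih =>
    have hstep : 1 / 4 * expectedVisits A (lineH M) ((x.1, x.2 + k) + (0, 1)) ≤
        expectedVisits A (lineH M) (x.1, x.2 + k) :=
      quarter_mul_expectedVisits_le (by decide) (by simpa using hcol _ (by lia))
        (summable_visitProb_lineH hA hM _) (summable_visitProb_lineH hA hM _)
    refine le_trans ?_ ih
    rw [pow_succ, mul_assoc]
    gcongr
    simpa [add_assoc] using hstep

end LineVisits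

/-! ### Barriers -/

section LowerBound

variable {A : Set (ℤ × ℤ)} {g : ℤ × ℤ → ℝ} {K : ℕ} {M : ℤ}

theorem tendsto_sum_visitProb_lineH (hA : lineH 0 ⊆ A) (K : ℕ) (x : ℤ × ℤ) :
    Tendsto (fun n => ∑ N ∈ Finset.range K, visitProb A (lineH N) n x) atTop (nhds 0) := by
  simpa using tendsto_finsetSum (Finset.range K) fun N _ =>
    (summable_visitProb_lineH hA N.cast_nonneg x).tendsto_atTop_zero

theorem sum_indicator_lineH {z : ℤ × ℤ} (h : 0 ≤ z.2) (hK : z.2 < K) :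
    ∑ N ∈ Finset.range K, (lineH N).indicator (1 : ℤ × ℤ → ℝ) z = 1 := by
  obtain ⟨N, hN⟩ := Int.eq_ofNat_of_zero_le h
  rw [Finset.sum_eq_single_of_mem N (by simpa [hN] using hK)]
  · exact Set.indicator_of_mem hN 1
  · intro N' _ hne
    exact Set.indicator_of_notMem (fun hN' : z.2 = N' => hne (by lia)) 1

theorem slabHeight_sub_le_mul_sum_indicator (hM : 0 ≤ M) (hnonneg : ∀ z, 0 < z.2 → 0 ≤ g z)
    (hgK : ∀ z, (K : ℤ) ≤ z.2 → M ≤ g z) {z : ℤ × ℤ} (hz : 0 < z.2) :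
    slabHeight 0 M z - g z ≤ M * ∑ N ∈ Finset.range K, (lineH N).indicator 1 z := by
  have hslab : slabHeight 0 M z ≤ M := by simpa using slabHeight_le hM z
  rcases lt_or_ge z.2 K with hzK | hzK
  · rw [sum_indicator_lineH hz.le hzK]
    linarith [hnonneg z hz]
  · have hsum : 0 ≤ ∑ N ∈ Finset.range K, (lineH N).indicator (1 : ℤ × ℤ → ℝ) z :=
      Finset.sum_nonneg fun N _ => Set.indicator_nonneg (fun _ _ => zero_le_one) z
    linarith [hgK z hzK, mul_nonneg (Int.cast_nonneg hM : (0 : ℝ) ≤ M) hsum]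

theorem slabHeight_sub_le_killedStep_pow (hA : lineH 0 ⊆ A) (hM : 0 ≤ M)
    (hsuper : ∀ z, 0 < z.2 → avg g z ≤ g z) (hgA : ∀ z ∈ A, 0 ≤ z.2 → z.2 ≤ g z) {y : ℤ × ℤ}
    (hy : 0 < y.2) (n : ℕ) :
    slabHeight 0 M y - g y - expectedVisits A (lineH M) y / 4 ≤
      (killedStep A ^ n) (slabHeight 0 M - g) y := by
  set f : ℤ × ℤ → ℝ := -((1 / 4 : ℝ) • (lineH M).indicator 1) with hf
  have hstep : ∀ z ∈ {z : ℤ × ℤ | 0 < z.2},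
      (slabHeight 0 M - g) z + f z ≤ killedStep A (slabHeight 0 M - g) z := by
    intro z (hz : 0 < z.2)
    refine le_trans ?_ (avg_le_killedStep fun d hd hzd => ?_)
    · have haxis : z ∉ lineH 0 := hz.ne'
      simp only [map_sub, avg_slabHeight hM, hf, Pi.add_apply, Pi.sub_apply, Pi.neg_apply,
        Pi.smul_apply, Set.indicator_of_notMem haxis, smul_eq_mul]
      linarith [hsuper z hz]
    · have hge : 0 ≤ (z + d).2 := by linarith [snd_sub_one_le_of_mem_dirs hd z]
      have hle : slabHeight 0 M (z + d) ≤ (z + d).2 := by simpa using slabHeight_le_sub hge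
      exact sub_nonpos.2 (hle.trans (hgA _ hzd hge))
  have hterm (m : ℕ) : (killedStep A ^ m) f y = -(1 / 4 * visitProb A (lineH M) m y) := by
    rw [hf, map_neg, map_smul]
    rfl
  have hsum := add_sum_le_killedStep_pow (confinedUntil_above_axis hA) hstep n y hy
  simp only [hterm, Finset.sum_neg_distrib, ← Finset.mul_sum, Pi.sub_apply] at hsum
  have hvisits : ∑ m ∈ Finset.range n, visitProb A (lineH M) m y ≤ expectedVisits A (lineH M) y :=
    (summable_visitProb_lineH hA hM y).sum_le_tsum _ fun m _ => visitProb_nonneg A _ m y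
  linarith

theorem four_mul_slabHeight_sub_le_expectedVisits (hA : lineH 0 ⊆ A) (hM : 0 ≤ M)
    (hsuper : ∀ z, 0 < z.2 → avg g z ≤ g z) (hnonneg : ∀ z, 0 < z.2 → 0 ≤ g z)
    (hgA : ∀ z ∈ A, 0 ≤ z.2 → z.2 ≤ g z) (hgK : ∀ z, (K : ℤ) ≤ z.2 → M ≤ g z) {y : ℤ × ℤ}
    (hy : 0 < y.2) : 4 * (slabHeight 0 M y - g y) ≤ expectedVisits A (lineH M) y := by
  set R : ℤ × ℤ → ℝ := (M : ℝ) • ∑ N ∈ Finset.range K, (lineH N).indicator 1 with hR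
  have hUR : ∀ z ∈ {z : ℤ × ℤ | 0 < z.2}, (slabHeight 0 M - g) z ≤ R z := fun z hz => by
    simpa [hR] using slabHeight_sub_le_mul_sum_indicator hM hnonneg hgK hz
  have hRn (n : ℕ) : (killedStep A ^ n) R y =
      M * ∑ N ∈ Finset.range K, visitProb A (lineH N) n y := by
    rw [hR, map_smul, map_sum, Pi.smul_apply, Finset.sum_apply]
    rfl
  have hle (n : ℕ) : slabHeight 0 M y - g y - expectedVisits A (lineH M) y / 4 ≤
      M * ∑ N ∈ Finset.range K, visitProb A (lineH N) n y :=
    calc slabHeight 0 M y - g y - expectedVisits A (lineH M) y / 4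
        ≤ (killedStep A ^ n) (slabHeight 0 M - g) y :=
          slabHeight_sub_le_killedStep_pow hA hM hsuper hgA hy n
      _ ≤ (killedStep A ^ n) R y :=
          killedStep_pow_mono (confinedUntil_above_axis hA) hUR n y hy
      _ = M * ∑ N ∈ Finset.range K, visitProb A (lineH N) n y := hRn n
  have hlim := ge_of_tendsto' ((tendsto_sum_visitProb_lineH hA K y).const_mul (M : ℝ)) hle
  rw [mul_zero] at hlim
  linarith

end LowerBound

/-- A positive function, harmonic above the axis, which dominates the height on `B` but is
sublinear on every column. High up in a column it is much smaller than the height, so there `B`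
has little effect on a walk coming down from infinity. -/
structure IsBarrier (B : Set (ℤ × ℤ)) (v : ℤ × ℤ → ℝ) : Prop where
  avg_eq : ∀ z, 0 < z.2 → avg v z = v z
  nonneg : ∀ z, 0 ≤ z.2 → 0 ≤ v z
  snd_le : ∀ z ∈ B, (z.2 : ℝ) ≤ v z
  tendsto_div : ∀ c : ℤ, Tendsto (fun j : ℕ => v (c, j) / j) atTop (nhds 0)

namespace IsBarrier

variable {B : Set (ℤ × ℤ)} {v : ℤ × ℤ → ℝ}

theorem le_expectedVisits (hv : IsBarrier B v) {y : ℤ × ℤ} (hy : 0 < y.2) {M : ℕ} (hM : y.2 ≤ M) :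
    2 * y.2 - 4 * v y ≤ expectedVisits (B ∪ lineH 0) (lineH M) y := by
  set g : ℤ × ℤ → ℝ := (1 / 2 : ℝ) • (fun z => (z.2 : ℝ)) + v with hg
  have hg_apply (z : ℤ × ℤ) : g z = z.2 / 2 + v z := by simp [hg, div_eq_inv_mul]
  have hpos (z : ℤ × ℤ) (hz : 0 < z.2) : (0 : ℝ) < z.2 := Int.cast_pos.2 hz
  have hle := four_mul_slabHeight_sub_le_expectedVisits (A := B ∪ lineH 0) (g := g) (K := 2 * M)
    Set.subset_union_right M.cast_nonneg
    (fun z hz => by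
      rw [hg, map_add, map_smul, avg_height, Pi.add_apply, hv.avg_eq z hz, Pi.add_apply])
    (fun z hz => by linarith [hg_apply z, hv.nonneg z hz.le, hpos z hz])
    (fun z hz hz0 => by
      have hz0' : (0 : ℝ) ≤ z.2 := Int.cast_nonneg hz0
      rcases hz with hz | (hz : z.2 = 0)
      · linarith [hg_apply z, hv.snd_le z hz]
      · linarith [hg_apply z, hv.nonneg z hz0, (Int.cast_eq_zero.2 hz : (z.2 : ℝ) = 0)])
    (fun z hz => by
      have hz' : ((2 * M : ℕ) : ℝ) ≤ z.2 := by exact_mod_cast hz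
      push_cast at hz' ⊢
      linarith [hg_apply z, hv.nonneg z (by lia)]) hy
  rw [slabHeight_of_mem_Icc ⟨hy.le, hM⟩, hg_apply, Int.cast_zero] at hle
  linarith

theorem exists_snd_le_of_mem (hv : IsBarrier B v) (c : ℤ) : ∃ J : ℤ, ∀ j, (c, j) ∈ B → j ≤ J := by
  have hlt : ∀ᶠ j : ℕ in atTop, v (c, j) / j < 1 :=
    (hv.tendsto_div c).eventually_lt_const zero_lt_one
  obtain ⟨J, hJ⟩ := eventually_atTop.1 hlt
  refine ⟨J, fun j hj => ?_⟩
  by_contra! hJj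
  obtain ⟨k, rfl⟩ := Int.eq_ofNat_of_zero_le ((Nat.cast_nonneg J).trans hJj.le)
  have hk : (0 : ℝ) < k := by exact_mod_cast (Nat.cast_nonneg J).trans_lt hJj
  have hlt := (div_lt_one hk).1 (hJ k (by exact_mod_cast hJj.le))
  exact hlt.not_ge (by simpa using hv.snd_le _ hj)

theorem exists_column_top (hv : IsBarrier B v) (hne : B.Nonempty) :
    ∃ x ∈ B, ∀ j, x.2 < j → (x.1, j) ∉ B := by
  obtain ⟨⟨c, i⟩, hi⟩ := hne
  obtain ⟨J, hJ⟩ := hv.exists_snd_le_of_mem c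
  obtain ⟨j, hj, hmax⟩ := Int.exists_greatest_of_bdd ⟨J, hJ⟩ ⟨i, hi⟩
  exact ⟨(c, j), hj, fun k hk hk' => hk.not_ge (hmax k hk')⟩

theorem exists_two_mul_lt_snd (hv : IsBarrier B v) (c i : ℤ) :
    ∃ k : ℕ, 0 < i + k ∧ 2 * v (c, i + k) < (i + k : ℤ) := by
  have hhalf : ∀ᶠ j : ℕ in atTop, v (c, j) / j < 1 / 2 :=
    (hv.tendsto_div c).eventually_lt_const one_half_pos
  obtain ⟨j, hj, hij⟩ := (hhalf.and (eventually_gt_atTop i.natAbs)).exists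
  have hj0 : (0 : ℝ) < j := by exact_mod_cast i.natAbs.zero_le.trans_lt hij
  rw [div_lt_iff₀ hj0] at hj
  obtain ⟨k, hk⟩ := Int.eq_ofNat_of_zero_le (show 0 ≤ (j : ℤ) - i by lia)
  rw [sub_eq_iff_eq_add'] at hk
  refine ⟨k, by lia, ?_⟩
  rw [← hk, Int.cast_natCast]
  linarith

theorem exists_pos_tendsto_harm (hv : IsBarrier B v) (hB : B ⊆ upperH) {x : ℤ × ℤ} (hx : x ∈ B)
    (htop : ∀ j, x.2 < j → (x.1, j) ∉ B) :
    ∃ l : ℝ, 0 < l ∧ Tendsto (fun N : ℕ => harm B N x) atTop (nhds l) := by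
  have hx0 : 0 ≤ x.2 := hB hx
  obtain ⟨l, hl⟩ := exists_tendsto_harm hB hx
  obtain ⟨k, hk0, hk⟩ := hv.exists_two_mul_lt_snd x.1 x.2
  have hcol (j : ℤ) (hj : x.2 < j) : (x.1, j) ∉ B ∪ lineH 0 :=
    fun h => h.elim (htop j hj) fun h0 : j = 0 => by lia
  have hlow : ∀ᶠ N : ℕ in atTop,
      (1 / 4) ^ k * (2 * (x.2 + k : ℤ) - 4 * v (x.1, x.2 + k)) ≤ harm B N x := by
    filter_upwards [eventually_gt_atTop (x.2 + k).toNat] with N hN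
    rw [harm_eq_expectedVisits hx (by lia)]
    refine le_trans ?_ (quarter_pow_mul_expectedVisits_le Set.subset_union_right
      N.cast_nonneg hcol k)
    gcongr
    exact hv.le_expectedVisits (y := (x.1, x.2 + k)) hk0 (Int.toNat_le.1 hN.le)
  exact ⟨l, lt_of_lt_of_le (mul_pos (by positivity) (by linarith)) (ge_of_tendsto hl hlow), hl⟩

end IsBarrier

/-! ### Dyadic superpositions of harmonic waves -/

theorem two_sub_cos_le_cosh (θ : ℝ) : 2 - Real.cos θ ≤ Real.cosh θ := by
  have hsinh : |θ| / 2 ≤ Real.sinh (|θ| / 2) := Real.self_le_sinh_iff.2 (by positivity)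
  have hcosh : Real.cosh θ = 1 + 2 * Real.sinh (|θ| / 2) ^ 2 := by
    rw [← Real.cosh_abs, ← mul_div_cancel₀ |θ| two_ne_zero, mul_div_assoc, Real.cosh_two_mul,
      Real.cosh_sq]
    ring_nf
  have hsq : (|θ| / 2) ^ 2 ≤ Real.sinh (|θ| / 2) ^ 2 := by gcongr
  rw [div_pow, sq_abs] at hsq
  linarith [Real.one_sub_sq_div_two_le_cos (x := θ)]

/-- The rate `s ≥ 0` with `cos θ + cosh s = 2`, which makes `cos (θ * i) * exp (-s * j)` harmonic
for the simple random walk. -/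
noncomputable def decayRate (θ : ℝ) : ℝ := Real.arcosh (2 - Real.cos θ)

theorem decayRate_nonneg (θ : ℝ) : 0 ≤ decayRate θ :=
  Real.arcosh_nonneg (by linarith [Real.cos_le_one θ])

theorem cosh_decayRate (θ : ℝ) : Real.cosh (decayRate θ) = 2 - Real.cos θ :=
  Real.cosh_arcosh (by linarith [Real.cos_le_one θ])

theorem decayRate_le_abs (θ : ℝ) : decayRate θ ≤ |θ| := by
  have hle : Real.cosh (decayRate θ) ≤ Real.cosh θ :=
    (cosh_decayRate θ).trans_le (two_sub_cos_le_cosh θ)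
  exact (le_abs_self _).trans (Real.cosh_le_cosh.1 hle)

/-- The discrete harmonic function `1 - cos (θ i) exp (-s j)` at `(i, j)`, where `s` is the decay
rate of `θ`. -/
noncomputable def harmonicWave (θ : ℝ) (z : ℤ × ℤ) : ℝ :=
  1 - Real.cos (θ * z.1) * Real.exp (-(decayRate θ * z.2))

section HarmonicWave

variable {θ : ℝ} {z : ℤ × ℤ}

theorem avg_harmonicWave (θ : ℝ) : avg (harmonicWave θ) = harmonicWave θ := by
  ext ⟨i, j⟩
  have hcos : Real.cos (θ * (i + 1)) + Real.cos (θ * (i - 1)) =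
      2 * Real.cos θ * Real.cos (θ * i) := by
    rw [mul_add, mul_sub, mul_one, Real.cos_add, Real.cos_sub]
    ring
  have hexp : Real.exp (-(decayRate θ * (j + 1))) + Real.exp (-(decayRate θ * (j - 1))) =
      2 * (2 - Real.cos θ) * Real.exp (-(decayRate θ * j)) := by
    rw [← cosh_decayRate, Real.cosh_eq, mul_add, mul_sub, mul_one, neg_add, neg_sub',
      sub_neg_eq_add, Real.exp_add, Real.exp_add]
    ring
  simp only [avg_apply_neighbors, harmonicWave]
  push_cast
  linear_combination (-1 / 4) * Real.exp (-(decayRate θ * j)) * hcos -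
    1 / 4 * Real.cos (θ * i) * hexp

theorem exp_neg_decayRate_mul_le_one (θ : ℝ) (hz : 0 ≤ z.2) :
    Real.exp (-(decayRate θ * z.2)) ≤ 1 :=
  Real.exp_le_one_iff.2 (neg_nonpos.2 (mul_nonneg (decayRate_nonneg θ) (Int.cast_nonneg hz)))

theorem abs_cos_mul_exp_le_one (θ : ℝ) (hz : 0 ≤ z.2) :
    |Real.cos (θ * z.1) * Real.exp (-(decayRate θ * z.2))| ≤ 1 := by
  rw [abs_mul, Real.abs_exp]
  exact mul_le_one₀ (Real.abs_cos_le_one _) (Real.exp_pos _).le (exp_neg_decayRate_mul_le_one θ hz)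

theorem harmonicWave_nonneg (θ : ℝ) (hz : 0 ≤ z.2) : 0 ≤ harmonicWave θ z :=
  sub_nonneg.2 (abs_le.1 (abs_cos_mul_exp_le_one θ hz)).2

theorem harmonicWave_le_two (θ : ℝ) (hz : 0 ≤ z.2) : harmonicWave θ z ≤ 2 := by
  rw [harmonicWave]
  linarith [(abs_le.1 (abs_cos_mul_exp_le_one θ hz)).1]

theorem harmonicWave_le_mul (θ : ℝ) (hz : 0 ≤ z.2) :
    harmonicWave θ z ≤ |θ| * (|(z.1 : ℝ)| + z.2) := by
  have hz' : (0 : ℝ) ≤ z.2 := Int.cast_nonneg hz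
  have hcos : 1 - Real.cos (θ * z.1) ≤ |θ| * |(z.1 : ℝ)| := by
    have hlip := Real.abs_cos_sub_cos_le 0 (θ * z.1)
    rw [Real.cos_zero, zero_sub, abs_neg, abs_mul] at hlip
    exact (le_abs_self _).trans hlip
  have hexp : 1 - Real.exp (-(decayRate θ * z.2)) ≤ |θ| * z.2 := by
    linarith [Real.one_sub_le_exp_neg (decayRate θ * z.2),
      mul_le_mul_of_nonneg_right (decayRate_le_abs θ) hz']
  calc harmonicWave θ z
      = 1 - Real.cos (θ * z.1) + Real.cos (θ * z.1) * (1 - Real.exp (-(decayRate θ * z.2))) := by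
        rw [harmonicWave]; ring
    _ ≤ 1 - Real.cos (θ * z.1) + (1 - Real.exp (-(decayRate θ * z.2))) := by
        gcongr
        exact mul_le_of_le_one_left (sub_nonneg.2 (exp_neg_decayRate_mul_le_one θ hz))
          (Real.cos_le_one _)
    _ ≤ |θ| * (|(z.1 : ℝ)| + z.2) := by linarith

theorem one_fourth_le_harmonicWave (hz : 0 ≤ z.2) (h1 : 1 ≤ |θ * z.1|) (h2 : |θ * z.1| ≤ 2) :
    1 / 4 ≤ harmonicWave θ z := by
  have hcos : Real.cos (θ * z.1) ≤ 5 / 9 := by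
    rw [← Real.cos_abs]
    exact (Real.cos_le_cos_of_nonneg_of_le_pi zero_le_one
      (h2.trans Real.two_le_pi) h1).trans Real.cos_one_le
  have hexp0 := Real.exp_pos (-(decayRate θ * z.2))
  have hexp1 := exp_neg_decayRate_mul_le_one θ hz
  rw [harmonicWave]
  nlinarith

end HarmonicWave

/-- The superposition `∑ₖ aₖ wₖ` of the harmonic waves `wₖ` of frequency `2⁻ᵏ`. As `wₖ` is bounded
below where `2ᵏ ≤ |i| ≤ 2ᵏ⁺¹`, the weight `aₖ` controls the size of the sum there. -/
noncomputable def dyadicWave (a : ℕ → ℝ) (z : ℤ × ℤ) : ℝ :=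
  ∑' k : ℕ, a k * harmonicWave ((2 ^ k)⁻¹) z

section DyadicWave

variable {a : ℕ → ℝ} {z : ℤ × ℤ}

theorem mul_harmonicWave_le (ha : 0 ≤ a) (hz : 0 ≤ z.2) (k : ℕ) :
    a k * harmonicWave ((2 ^ k)⁻¹) z ≤ a k / 2 ^ k * (|(z.1 : ℝ)| + z.2) := by
  have hle := harmonicWave_le_mul ((2 ^ k)⁻¹) hz
  rw [abs_of_pos (by positivity)] at hle
  rw [div_eq_mul_inv, mul_assoc]
  exact mul_le_mul_of_nonneg_left hle (ha k)

theorem mul_harmonicWave_nonneg (ha : 0 ≤ a) (hz : 0 ≤ z.2) (k : ℕ) :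
    0 ≤ a k * harmonicWave ((2 ^ k)⁻¹) z :=
  mul_nonneg (ha k) (harmonicWave_nonneg _ hz)

theorem summable_mul_harmonicWave (ha : 0 ≤ a) (hsum : Summable fun k => a k / 2 ^ k)
    (hz : 0 ≤ z.2) : Summable fun k => a k * harmonicWave ((2 ^ k)⁻¹) z :=
  (hsum.mul_right _).of_nonneg_of_le (mul_harmonicWave_nonneg ha hz) (mul_harmonicWave_le ha hz)

theorem dyadicWave_nonneg (ha : 0 ≤ a) (hz : 0 ≤ z.2) : 0 ≤ dyadicWave a z :=
  tsum_nonneg (mul_harmonicWave_nonneg ha hz)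

theorem avg_dyadicWave (ha : 0 ≤ a) (hsum : Summable fun k => a k / 2 ^ k) (hz : 0 < z.2) :
    avg (dyadicWave a) z = dyadicWave a z := by
  have hs (d : ℤ × ℤ) (hd : d ∈ dirs) :
      Summable fun k => a k * harmonicWave ((2 ^ k)⁻¹) (z + d) :=
    summable_mul_harmonicWave ha hsum (by linarith [snd_sub_one_le_of_mem_dirs hd z])
  simp only [avg_apply, dyadicWave]
  rw [← Summable.tsum_finsetSum hs, ← tsum_div_const]
  refine tsum_congr fun k => ?_
  rw [← Finset.mul_sum, mul_div_assoc, ← avg_apply, avg_harmonicWave]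

theorem div_four_le_dyadicWave (ha : 0 ≤ a) (hsum : Summable fun k => a k / 2 ^ k)
    (hz : 0 ≤ z.2) {k : ℕ} (h1 : 2 ^ k ≤ |(z.1 : ℝ)|) (h2 : |(z.1 : ℝ)| ≤ 2 ^ (k + 1)) :
    a k / 4 ≤ dyadicWave a z := by
  have hk : (0 : ℝ) < 2 ^ k := by positivity
  have habs : |((2 : ℝ) ^ k)⁻¹ * z.1| = |(z.1 : ℝ)| / 2 ^ k := by
    rw [abs_mul, abs_of_pos (inv_pos.2 hk), inv_mul_eq_div]
  have hwave : 1 / 4 ≤ harmonicWave ((2 ^ k)⁻¹) z := by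
    apply one_fourth_le_harmonicWave hz
    · rwa [habs, one_le_div hk]
    · rwa [habs, div_le_iff₀ hk, ← pow_succ']
  calc a k / 4 = a k * (1 / 4) := by ring
    _ ≤ a k * harmonicWave ((2 ^ k)⁻¹) z := mul_le_mul_of_nonneg_left hwave (ha k)
    _ ≤ dyadicWave a z := (summable_mul_harmonicWave ha hsum hz).le_tsum k
        fun m _ => mul_harmonicWave_nonneg ha hz m

theorem tendsto_dyadicWave_div (ha : 0 ≤ a) (hsum : Summable fun k => a k / 2 ^ k) (c : ℤ) :
    Tendsto (fun j : ℕ => dyadicWave a (c, j) / j) atTop (nhds 0) := by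
  have hterm (k : ℕ) : Tendsto (fun j : ℕ => a k * harmonicWave ((2 ^ k)⁻¹) (c, j) / j) atTop
      (nhds 0) := by
    refine squeeze_zero (fun j => ?_) (fun j => ?_)
      (tendsto_const_div_atTop_nhds_zero_nat (a k * 2))
    · exact div_nonneg (mul_harmonicWave_nonneg ha j.cast_nonneg k) j.cast_nonneg
    · gcongr
      · exact ha k
      · exact harmonicWave_le_two _ j.cast_nonneg
  have hbound : ∀ᶠ j : ℕ in atTop, ∀ k, ‖a k * harmonicWave ((2 ^ k)⁻¹) (c, j) / j‖ ≤
      a k / 2 ^ k * (|(c : ℝ)| + 1) := by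
    filter_upwards [eventually_ge_atTop 1] with j hj k
    have hj' : (1 : ℝ) ≤ j := Nat.one_le_cast.2 hj
    have hle := mul_harmonicWave_le ha (z := (c, j)) j.cast_nonneg k
    rw [Real.norm_of_nonneg (div_nonneg (mul_harmonicWave_nonneg ha j.cast_nonneg k)
      j.cast_nonneg), div_le_iff₀ (by positivity), mul_assoc]
    refine hle.trans (mul_le_mul_of_nonneg_left ?_ (div_nonneg (ha k) (by positivity)))
    push_cast
    nlinarith [abs_nonneg (c : ℝ)]
  simpa only [dyadicWave, ← tsum_div_const, tsum_zero] using
    tendsto_tsum_of_dominated_convergence (hsum.mul_right (|(c : ℝ)| + 1)) hterm hbound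

theorem isBarrier_dyadicWave_add_const {B : Set (ℤ × ℤ)} {D : ℝ} (ha : 0 ≤ a)
    (hsum : Summable fun k => a k / 2 ^ k) (hD : 0 ≤ D)
    (hB : ∀ z ∈ B, (z.2 : ℝ) ≤ dyadicWave a z + D) :
    IsBarrier B (dyadicWave a + fun _ => D) where
  avg_eq z hz := by rw [map_add, avg_const, Pi.add_apply, avg_dyadicWave ha hsum hz, Pi.add_apply]
  nonneg z hz := add_nonneg (dyadicWave_nonneg ha hz) hD
  snd_le := hB
  tendsto_div c := by
    simpa [add_div] using
      (tendsto_dyadicWave_div ha hsum c).add (tendsto_const_div_atTop_nhds_zero_nat D)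

end DyadicWave

/-! ### Sets below a graph -/

section BelowGraph

variable {B : Set (ℤ × ℤ)} {φ : ℝ → ℝ}

theorem summable_dyadic_weights (hsum : Summable fun k : ℕ => φ (2 ^ k) / 2 ^ k) :
    Summable fun k : ℕ => 4 * |φ (2 ^ (k + 1))| / 2 ^ k := by
  refine (((summable_nat_add_iff 1).2 hsum).abs.mul_left 8).congr fun k => ?_
  rw [abs_div, abs_of_pos (by positivity : (0 : ℝ) < 2 ^ (k + 1)), pow_succ]
  field

theorem le_dyadicWave_add_of_monotoneOn (hφ : MonotoneOn φ (Set.Ici 0))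
    (hsum : Summable fun k : ℕ => φ (2 ^ k) / 2 ^ k) {z : ℤ × ℤ} (hz : 0 ≤ z.2) :
    φ |(z.1 : ℝ)| ≤ dyadicWave (fun k => 4 * |φ (2 ^ (k + 1))|) z + |φ 0| := by
  have ha : 0 ≤ fun k : ℕ => 4 * |φ (2 ^ (k + 1))| := fun k => by positivity
  have hnonneg := dyadicWave_nonneg ha hz
  rcases eq_or_ne z.1 0 with h0 | h0
  · rw [h0, Int.cast_zero, abs_zero]
    linarith [le_abs_self (φ 0)]
  · have habs : (1 : ℝ) ≤ |(z.1 : ℝ)| := by exact_mod_cast Int.one_le_abs h0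
    obtain ⟨k, hk1, hk2⟩ := exists_nat_pow_near habs one_lt_two
    calc φ |(z.1 : ℝ)|
        ≤ φ (2 ^ (k + 1)) :=
          hφ (Set.mem_Ici.2 (abs_nonneg _)) (Set.mem_Ici.2 (by positivity)) hk2.le
      _ ≤ 4 * |φ (2 ^ (k + 1))| / 4 := by linarith [le_abs_self (φ (2 ^ (k + 1)))]
      _ ≤ dyadicWave (fun k => 4 * |φ (2 ^ (k + 1))|) z :=
          div_four_le_dyadicWave ha (summable_dyadic_weights hsum) hz hk1 hk2.le
      _ ≤ dyadicWave (fun k => 4 * |φ (2 ^ (k + 1))|) z + |φ 0| :=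
          le_add_of_nonneg_right (abs_nonneg _)

theorem exists_isBarrier (hB : B ⊆ upperH) (hφ : MonotoneOn φ (Set.Ici 0))
    (hsum : Summable fun k : ℕ => φ (2 ^ k) / 2 ^ k)
    (hfin : (B \ {x ∈ upperH | (x.2 : ℝ) ≤ φ |(x.1 : ℝ)|}).Finite) : ∃ v, IsBarrier B v := by
  have ha : 0 ≤ fun k : ℕ => 4 * |φ (2 ^ (k + 1))| := fun k => by positivity
  obtain ⟨D, hD⟩ := (hfin.image fun z => (z.2 : ℝ)).bddAbove
  refine ⟨_, isBarrier_dyadicWave_add_const (D := |φ 0| + |D|) ha (summable_dyadic_weights hsum)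
    (by positivity) fun z hz => ?_⟩
  by_cases hzφ : (z.2 : ℝ) ≤ φ |(z.1 : ℝ)|
  · linarith [le_dyadicWave_add_of_monotoneOn hφ hsum (hB hz), abs_nonneg D]
  · have hzD : (z.2 : ℝ) ≤ D := hD ⟨z, ⟨hz, fun h => hzφ h.2⟩, rfl⟩
    linarith [dyadicWave_nonneg ha (hB hz), le_abs_self D, abs_nonneg (φ 0)]

end BelowGraph

theorem summable_rpow_two_pow_div {β : ℝ} (hβ : β < 1) :
    Summable fun k : ℕ => ((2 : ℝ) ^ k) ^ β / 2 ^ k := by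
  have hlt : (2 : ℝ) ^ β < 2 := by
    simpa using Real.rpow_lt_rpow_of_exponent_lt one_lt_two hβ
  refine (summable_geometric_of_lt_one (by positivity) ((div_lt_one two_pos).2 hlt)).congr
    fun k => ?_
  rw [div_pow, ← Real.rpow_natCast_mul zero_le_two, mul_comm, Real.rpow_mul_natCast zero_le_two]

theorem exists_harm_pos_of_subLinear_general (B : Set (ℤ × ℤ)) (hB : B ⊆ upperH)
    (hne : B.Nonempty) {φ : ℝ → ℝ} (hφ : MonotoneOn φ (Set.Ici 0))
    (hsum : Summable fun k : ℕ => φ (2 ^ k) / 2 ^ k)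
    (hfin : (B \ {x ∈ upperH | (x.2 : ℝ) ≤ φ |(x.1 : ℝ)|}).Finite) :
    ∃ x ∈ B, ∃ l : ℝ, 0 < l ∧ Tendsto (fun N : ℕ => harm B N x) atTop (nhds l) := by
  obtain ⟨v, hv⟩ := exists_isBarrier hB hφ hsum hfin
  obtain ⟨x, hx, htop⟩ := hv.exists_column_top hne
  exact ⟨x, hx, hv.exists_pos_tendsto_harm hB hx htop⟩

/-- **Theorem 2.** Let `B ⊂ ℍ` be nonempty and suppose there exists `α > 1` such that
`B \ {x ∈ ℍ : x₂ ≤ |x₁|^{1/α}}` is finite.  Then some `x ∈ B` has positive stationary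
harmonic measure, i.e. `H_{B,N}(x)` converges as `N → ∞` to a positive limit. -/
theorem exists_harm_pos_of_subLinear (B : Set (ℤ × ℤ)) (hB : B ⊆ upperH) (hne : B.Nonempty)
    (hfin : ∃ α : ℝ, 1 < α ∧
      (B \ {x ∈ upperH | (x.2 : ℝ) ≤ |(x.1 : ℝ)| ^ (1 / α)}).Finite) :
    ∃ x ∈ B, ∃ l : ℝ, 0 < l ∧ Tendsto (fun N : ℕ => harm B N x) atTop (nhds l) := by
  obtain ⟨α, hα, hfin⟩ := hfin
  exact exists_harm_pos_of_subLinear_general B hB hne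
    (Real.monotoneOn_rpow_Ici_of_exponent_nonneg (by positivity))
    (summable_rpow_two_pow_div ((div_lt_one (by positivity)).2 hα)) hfin

end SHM
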